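/- Fix integers b ≥ 2, n ≥ 1 and r ≥ 0, and let P_b be the Holte carries matrix. Then the (0, n−1) entry of the r-th matrix power of P_b equals binom(b^r, n)/b^{rn}; i.e., (P_b)^r(0, n−1) = binom(b^r, n)·b^{−rn}. (This is the probability that r successive b-shuffles of n cards, started at the identity, produce the unique permutation with n−1 descents.) -/

import Mathlib

/-- The number of descents of a map `σ : Fin n → Fin n`:
the number of indices `i` with `σ (i+1) < σ i`. -/
noncomputable def descents {n : ℕ} (σ : Fin n → Fin n) : ℕ :=
  Nat.card {i : Fin n // ∃ h : i.1 + 1 < n, σ ⟨i.1 + 1, h⟩ < σ i}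

/-- Holte's "amazing matrix" as an `n × n` real matrix: the carries Markov chain has
`P_b(i,j) = b^{-n} · #{(x_1,…,x_n) ∈ {0,…,b−1}^n : jb ≤ i + x_1 + ⋯ + x_n ≤ (j+1)b − 1}`. -/
noncomputable def PM (b n : ℕ) : Matrix (Fin n) (Fin n) ℝ :=
  Matrix.of fun i j =>
    (Nat.card {x : Fin n → Fin b //
        (j : ℕ) * b ≤ (i : ℕ) + ∑ t, (x t : ℕ) ∧
          (i : ℕ) + ∑ t, (x t : ℕ) ≤ ((j : ℕ) + 1) * b - 1} : ℝ) / b ^ n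

/-- The stationary distribution of the carries chain: `π(j) = A(n,j)/n!` where `A(n,j)`
is the Eulerian number, the number of permutations of `{1,…,n}` with exactly `j`
descents. -/
noncomputable def eulerStat (n : ℕ) (j : ℕ) : ℝ :=
  (Nat.card {σ : Equiv.Perm (Fin n) // descents ⇑σ = j} : ℝ) / (Nat.factorial n)

/-!
Adding `n` numbers in base `a * b` from an initial carry `i` can be done in two stages, first the
low base-`b` digits and then the high base-`a` digits, the carry of the first stage entering the
second. Hence `P_b * P_a = P_{ab}`, so `P_b ^ r = P_{b ^ r}`, and it remains to find the
`(0, n - 1)` entry of a single `P_B`. Replacing each digit `x` by `B - 1 - x` turns the digit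
vectors with outgoing carry `n - 1` into those with digit sum at most `B - n`, and by stars and bars
there are `binom(B, n)` of these.
-/

section StarsAndBars

open Finset

/-- A vector of sum at most `m` as a vector of sum exactly `m`, with the slack as an additional
entry at `none`. -/
def sumLeEquivSumEq (ι : Type*) [Fintype ι] (m : ℕ) :
    {y : ι → ℕ // ∑ t, y t ≤ m} ≃ {P : Option ι → ℕ // ∑ o, P o = m} where
  toFun y := ⟨fun o => o.elim (m - ∑ t, y.1 t) y.1, by
    simpa [Fintype.sum_option] using Nat.sub_add_cancel y.2⟩
  invFun P := ⟨fun t => P.1 (some t), by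
    simpa [← Fintype.sum_option, P.2] using Nat.le_add_left (∑ t, P.1 (some t)) (P.1 none)⟩
  left_inv _ := rfl
  right_inv P := by
    have := P.2
    rw [Fintype.sum_option] at this
    ext (_ | t)
    · simp only [Option.elim_none]
      omega
    · rfl

/-- Digit vectors in base `b` of sum at most `m` as arbitrary vectors of naturals of sum at most
`m`: for `m < b` the bound on the sum already forces every entry below `b`. -/
def finSumLeEquivSumLe (ι : Type*) [Fintype ι] {m b : ℕ} (h : m < b) :
    {x : ι → Fin b // ∑ t, (x t : ℕ) ≤ m} ≃ {y : ι → ℕ // ∑ t, y t ≤ m} where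
  toFun x := ⟨fun t => x.1 t, x.2⟩
  invFun y := ⟨fun t => ⟨y.1 t,
    ((single_le_sum_of_canonicallyOrdered (mem_univ t)).trans y.2).trans_lt h⟩, y.2⟩
  left_inv _ := rfl
  right_inv _ := rfl

variable {ι : Type*} [Fintype ι] [DecidableEq ι]

theorem card_filter_sum_le {m b : ℕ} (h : m < b) :
    #{x : ι → Fin b | ∑ t, (x t : ℕ) ≤ m} =
      (m + Fintype.card ι).choose (Fintype.card ι) := by
  rw [← Fintype.card_subtype, ← Nat.card_eq_fintype_card,
    Nat.card_congr (((finSumLeEquivSumLe ι h).trans (sumLeEquivSumEq ι m)).trans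
      (Sym.equivNatSumOfFintype (Option ι) m).symm),
    Nat.card_eq_fintype_card, Sym.card_sym_eq_choose, Fintype.card_option,
    Nat.add_right_comm, Nat.add_sub_cancel, add_comm, Nat.choose_symm_add]

theorem card_filter_sum_add_card_le [Nonempty ι] (b : ℕ) :
    #{x : ι → Fin b | ∑ t, (x t : ℕ) + Fintype.card ι ≤ b} = b.choose (Fintype.card ι) := by
  rcases lt_or_ge b (Fintype.card ι) with hlt | hle
  · rw [Nat.choose_eq_zero_of_lt hlt, card_eq_zero, filter_eq_empty_iff]
    omega
  · have hm : b - Fintype.card ι < b :=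
      Nat.sub_lt (Fintype.card_pos.trans_le hle) Fintype.card_pos
    simp only [← Nat.le_sub_iff_add_le hle, card_filter_sum_le hm, Nat.sub_add_cancel hle]

end StarsAndBars

section Carry

open Finset

variable {ι : Type*} {a b : ℕ}

/-- Digit vectors in base `a * b` as pairs of a vector of high digits, in base `a`, and a vector of
low digits, in base `b`. -/
def digitPairEquiv (ι : Type*) (a b : ℕ) : (ι → Fin a) × (ι → Fin b) ≃ (ι → Fin (a * b)) :=
  (Equiv.arrowProdEquivProdArrow ι (fun _ => Fin a) fun _ => Fin b).symm.trans
    (Equiv.piCongrRight fun _ => finProdFinEquiv)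

theorem digitPairEquiv_apply_val (p : (ι → Fin a) × (ι → Fin b)) (t : ι) :
    (digitPairEquiv ι a b p t : ℕ) = p.2 t + b * p.1 t :=
  rfl

variable [Fintype ι]

/-- The carry out of one column of an addition in base `b`: the column holds the digits `x t`, and
`i` is the carry coming in. -/
def carry (i : ℕ) (x : ι → Fin b) : ℕ :=
  (i + ∑ t, (x t : ℕ)) / b

theorem sum_add_sum_rev_add_card (x : ι → Fin b) :
    ∑ t, (x t : ℕ) + ∑ t, ((x t).rev : ℕ) + Fintype.card ι = Fintype.card ι * b := by
  have digit_add_rev (t : ι) : (x t : ℕ) + (x t).rev + 1 = b := by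
    rw [Fin.val_rev]
    omega
  simpa [sum_add_distrib] using sum_congr rfl fun t (_ : t ∈ univ) => digit_add_rev t

theorem carry_lt_card {i : ℕ} (hi : i < Fintype.card ι) (x : ι → Fin b) :
    carry i x < Fintype.card ι := by
  refine Nat.div_lt_of_lt_mul ?_
  have := sum_add_sum_rev_add_card x
  rw [mul_comm]
  omega

theorem carry_add_one_eq_card_iff {i : ℕ} (hi : i < Fintype.card ι) (x : ι → Fin b) :
    carry i x + 1 = Fintype.card ι ↔
      ∑ t, ((x t).rev : ℕ) + Fintype.card ι ≤ b + i := by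
  obtain ⟨t⟩ : Nonempty ι := Fintype.card_pos_iff.mp (by omega)
  have sum_eq := sum_add_sum_rev_add_card x
  obtain ⟨n, hn⟩ : ∃ n, Fintype.card ι = n + 1 := ⟨_, (Nat.sub_add_cancel (by omega)).symm⟩
  calc carry i x + 1 = Fintype.card ι
    _ ↔ n ≤ carry i x := by
      have := carry_lt_card hi x
      omega
    _ ↔ n * b ≤ i + ∑ t, (x t : ℕ) := Nat.le_div_iff_mul_le (x t).pos
    _ ↔ ∑ t, ((x t).rev : ℕ) + Fintype.card ι ≤ b + i := by
      rw [hn, Nat.succ_mul] at sum_eq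
      omega

theorem carry_digitPairEquiv [Nonempty ι] (i : ℕ) (p : (ι → Fin a) × (ι → Fin b)) :
    carry i (digitPairEquiv ι a b p) = carry (carry i p.2) p.1 := by
  have hb : 0 < b := (p.2 (Classical.arbitrary ι)).pos
  simp only [carry, digitPairEquiv_apply_val, sum_add_distrib, ← mul_sum]
  rw [mul_comm a b, ← Nat.div_div_eq_div_mul, ← add_assoc, Nat.add_mul_div_left _ _ hb]

variable [DecidableEq ι]

theorem card_filter_carry_mul_eq_sum {i : ℕ} (hi : i < Fintype.card ι) (k : ℕ) :
    #{z : ι → Fin (a * b) | carry i z = k} =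
      ∑ j ∈ range (Fintype.card ι),
        #{x : ι → Fin b | carry i x = j} * #{y : ι → Fin a | carry j y = k} := by
  have : Nonempty ι := Fintype.card_pos_iff.mp (by omega)
  calc #{z : ι → Fin (a * b) | carry i z = k}
    _ = #{p : (ι → Fin a) × (ι → Fin b) | carry (carry i p.2) p.1 = k} :=
      (card_equiv (digitPairEquiv ι a b) (by simp [carry_digitPairEquiv])).symm
    _ = ∑ j ∈ range (Fintype.card ι),
          #{p ∈ {p : (ι → Fin a) × (ι → Fin b) | carry (carry i p.2) p.1 = k} |
            carry i p.2 = j} :=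
      card_eq_sum_card_fiberwise fun p _ => mem_coe.mpr (mem_range.mpr (carry_lt_card hi p.2))
    _ = ∑ j ∈ range (Fintype.card ι),
          #{x : ι → Fin b | carry i x = j} * #{y : ι → Fin a | carry j y = k} := by
      refine sum_congr rfl fun j _ => ?_
      rw [mul_comm, ← card_product]
      congr 1
      ext p
      simp only [mem_filter, mem_univ, true_and, mem_product]
      exact and_congr_left fun h => by rw [h]

theorem card_filter_carry_zero_add_one_eq_card [Nonempty ι] (b : ℕ) :
    #{x : ι → Fin b | carry 0 x + 1 = Fintype.card ι} = b.choose (Fintype.card ι) := by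
  rw [← card_filter_sum_add_card_le]
  refine card_equiv (Equiv.piCongrRight fun _ => Fin.revPerm) fun x => ?_
  simp [carry_add_one_eq_card_iff Fintype.card_pos]

end Carry

section CarriesMatrix

open Finset

theorem mul_le_and_le_sub_one_iff_div_eq {b : ℕ} (hb : 0 < b) (j s : ℕ) :
    j * b ≤ s ∧ s ≤ (j + 1) * b - 1 ↔ s / b = j := by
  rw [Nat.div_eq_iff hb, Nat.succ_mul, Nat.add_sub_assoc hb]

theorem PM_apply (b n : ℕ) (i j : Fin n) :
    PM b n i j = (#{x : Fin n → Fin b | carry i x = j} : ℝ) / b ^ n := by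
  rw [PM, Matrix.of_apply, Nat.subtype_card]
  intro x
  rw [mem_filter_univ, mul_le_and_le_sub_one_iff_div_eq (x i).pos, carry]

theorem PM_mul (a b n : ℕ) : PM b n * PM a n = PM (a * b) n := by
  ext i k
  have count_eq := card_filter_carry_mul_eq_sum (ι := Fin n) (a := a) (b := b) (i := i) (by simp) k
  rw [Fintype.card_fin, ← Fin.sum_univ_eq_sum_range
    (fun j => #{x : Fin n → Fin b | carry i x = j} * #{y : Fin n → Fin a | carry j y = k})]
    at count_eq
  simp only [Matrix.mul_apply, PM_apply, div_mul_div_comm, ← sum_div, count_eq]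
  push_cast
  rw [mul_comm (a : ℝ), mul_pow]

theorem PM_one (n : ℕ) : PM 1 n = 1 := by
  ext i j
  simp [PM_apply, Matrix.one_apply, carry, Fin.ext_iff, filter_const, apply_ite]

theorem PM_pow (b n r : ℕ) : PM b n ^ r = PM (b ^ r) n := by
  induction r with
  | zero => rw [pow_zero, pow_zero, PM_one]
  | succ r ih => rw [pow_succ', ih, PM_mul, pow_succ]

theorem PM_zero_last (b n : ℕ) :
    PM b (n + 1) 0 (Fin.last n) = (b.choose (n + 1) : ℝ) / b ^ (n + 1) := by
  have count_eq := card_filter_carry_zero_add_one_eq_card (ι := Fin (n + 1)) b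
  simp only [Fintype.card_fin, Nat.add_right_cancel_iff] at count_eq
  rw [PM_apply, Fin.val_zero, Fin.val_last, count_eq]

end CarriesMatrix

/-- **The top-right entry of powers of Holte's matrix** (from the proof of Theorem 7 of
Diaconis–Fulman, via Bayer–Diaconis): `P_b^r(0, n−1) = binom(b^r, n)/b^{rn}`, the
probability that `r` successive `b`-shuffles of `n` cards, started at the identity,
produce the unique permutation with `n−1` descents. -/
theorem power_entry_eq_choose (b n : ℕ) (hb : 2 ≤ b) (hn : 1 ≤ n) (r : ℕ) :
    (PM b n ^ r) ⟨0, hn⟩ ⟨n - 1, by omega⟩ =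
      ((b ^ r).choose n : ℝ) / (b : ℝ) ^ (r * n) := by
  obtain ⟨m, rfl⟩ := Nat.exists_eq_add_of_le' hn
  rw [PM_pow, pow_mul, ← Nat.cast_pow]
  exact PM_zero_last (b ^ r) m
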